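/- arXiv:1506.06688 — 2 statements merged into one kernel-verified Lean document; each statement's English description precedes it below -/
import Mathlib

section
/- Let M be a matrix with t ≥ 1 columns and u ≥ 1 rows and entries in {0, 1, −1}. Then the limit lim_{n→∞} |Grid_n(M)|^{1/n} exists and equals ρ(G(M))², the square of the spectral radius of the row-column graph of M. -/
noncomputable section

open Filter

open scoped Classical

/-- The point `p` (0-based) of the permutation `σ` lies in the cell `(i, j)` of the gridding
determined by the column dividers `c` and row dividers `r`. -/
def InCell {t u k : ℕ} (σ : Equiv.Perm (Fin k)) (c : Fin (t + 1) → ℕ) (r : Fin (u + 1) → ℕ)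
    (i : Fin t) (j : Fin u) (p : Fin k) : Prop :=
  c i.castSucc ≤ (p : ℕ) ∧ (p : ℕ) < c i.succ ∧
    r j.castSucc ≤ (σ p : ℕ) ∧ (σ p : ℕ) < r j.succ

/-- `c`, `r` form an `M`-gridding of the permutation `σ`. -/
def IsGridding {t u k : ℕ} (M : Fin t → Fin u → ℤ) (σ : Equiv.Perm (Fin k))
    (c : Fin (t + 1) → ℕ) (r : Fin (u + 1) → ℕ) : Prop :=
  Monotone c ∧ Monotone r ∧ c 0 = 0 ∧ c (Fin.last t) = k ∧ r 0 = 0 ∧ r (Fin.last u) = k ∧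
    ∀ (i : Fin t) (j : Fin u),
      (M i j = 0 → ∀ p : Fin k, ¬ InCell σ c r i j p) ∧
        (M i j = 1 → ∀ p q : Fin k, InCell σ c r i j p → InCell σ c r i j q →
          p < q → σ p < σ q) ∧
          (M i j = -1 → ∀ p q : Fin k, InCell σ c r i j p → InCell σ c r i j q →
            p < q → σ q < σ p)

/-- Membership in the monotone grid class `Grid(M)`. -/
def InGridClass {t u : ℕ} (M : Fin t → Fin u → ℤ) {k : ℕ} (σ : Equiv.Perm (Fin k)) : Prop :=
  ∃ (c : Fin (t + 1) → ℕ) (r : Fin (u + 1) → ℕ), IsGridding M σ c r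

/-- `|Grid_n(M)|`, the number of permutations of length `n` in the grid class of `M`. -/
def gridCount {t u : ℕ} (M : Fin t → Fin u → ℤ) (n : ℕ) : ℕ :=
  Nat.card {σ : Equiv.Perm (Fin n) // InGridClass M σ}

/-- The row-column graph `G(M)`: bipartite graph on columns and rows of `M`, with `c_i`
adjacent to `r_j` iff `M i j ≠ 0`. -/
def rowColGraph {t u : ℕ} (M : Fin t → Fin u → ℤ) : SimpleGraph (Fin t ⊕ Fin u) :=
  SimpleGraph.fromRel fun x y =>
    ∃ (i : Fin t) (j : Fin u), x = Sum.inl i ∧ y = Sum.inr j ∧ M i j ≠ 0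

/-- The (real) adjacency matrix of a finite simple graph. -/
def graphAdjMatrix {V : Type*} [Fintype V] (G : SimpleGraph V) : Matrix V V ℝ :=
  Matrix.of fun a b => if G.Adj a b then (1 : ℝ) else 0

/-- The spectral radius of a finite simple graph: the largest (real) eigenvalue of its
adjacency matrix, i.e. the largest real root of the characteristic polynomial. -/
def graphSpectralRadius {V : Type*} [Fintype V] [DecidableEq V] (G : SimpleGraph V) : ℝ :=
  sSup {x : ℝ | (graphAdjMatrix G).charpoly.IsRoot x}

def GoodGrid {t u n : ℕ} (M : Fin t → Fin u → ℤ) (κ : Fin n → Fin t) (ϱ : Fin n → Fin u)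
    (σ : Equiv.Perm (Fin n)) : Prop :=
  (∀ p, M (κ p) (ϱ (σ p)) ≠ 0) ∧
  ∀ p q, p < q → κ p = κ q → ϱ (σ p) = ϱ (σ q) →
    (M (κ p) (ϱ (σ p)) = 1 → σ p < σ q) ∧ (M (κ p) (ϱ (σ p)) = -1 → σ q < σ p)

def divOf {t n : ℕ} (κ : Fin n → Fin t) (i : Fin (t + 1)) : ℕ :=
  (Finset.univ.filter fun p : Fin n => (κ p : ℕ) < i).card

lemma lt_divOf_iff {t n : ℕ} {κ : Fin n → Fin t} (hκ : Monotone κ) (i : Fin (t + 1)) (p : Fin n) :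
    (p : ℕ) < divOf κ i ↔ (κ p : ℕ) < i := by
  constructor
  · intro h
    by_contra hc
    have : divOf κ i ≤ (Finset.Iio p).card := by
      apply Finset.card_le_card
      intro q hq
      simp only [Finset.mem_filter, Finset.mem_univ, true_and] at hq
      rw [Finset.mem_Iio]
      by_contra hqp
      have := hκ (not_lt.1 hqp)
      rw [Fin.le_def] at this
      omega
    rw [Fin.card_Iio] at this
    omega
  · intro h
    have : (Finset.Iic p).card ≤ divOf κ i := by
      apply Finset.card_le_card
      intro q hq
      rw [Finset.mem_Iic] at hq
      have := hκ hq
      rw [Fin.le_def] at this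
      simp only [Finset.mem_filter, Finset.mem_univ, true_and]
      omega
    rw [Fin.card_Iic] at this
    omega

lemma divOf_mono {t n : ℕ} (κ : Fin n → Fin t) : Monotone (divOf κ) := by
  intro i j hij
  apply Finset.card_le_card
  intro q hq
  simp only [Finset.mem_filter, Finset.mem_univ, true_and] at hq ⊢
  rw [Fin.le_def] at hij
  omega

lemma divOf_zero {t n : ℕ} (κ : Fin n → Fin t) : divOf κ 0 = 0 := by
  simp [divOf]

lemma divOf_last {t n : ℕ} (κ : Fin n → Fin t) : divOf κ (Fin.last t) = n := by
  simp [divOf]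

lemma divOf_cell {t n : ℕ} {κ : Fin n → Fin t} (hκ : Monotone κ) (i : Fin t) (p : Fin n) :
    (divOf κ i.castSucc ≤ (p : ℕ) ∧ (p : ℕ) < divOf κ i.succ) ↔ κ p = i := by
  rw [lt_divOf_iff hκ, ← not_lt, lt_divOf_iff hκ, Fin.ext_iff]
  simp
  omega

lemma GoodGrid.inGridClass {t u n : ℕ} {M : Fin t → Fin u → ℤ} {κ : Fin n → Fin t}
    {ϱ : Fin n → Fin u} {σ : Equiv.Perm (Fin n)} (hκ : Monotone κ) (hϱ : Monotone ϱ)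
    (h : GoodGrid M κ ϱ σ) : InGridClass M σ := by
  have key : ∀ i j p, InCell σ (divOf κ) (divOf ϱ) i j p ↔ κ p = i ∧ ϱ (σ p) = j := by
    intro i j p
    rw [← divOf_cell hκ, ← divOf_cell hϱ, InCell]
    tauto
  refine ⟨divOf κ, divOf ϱ, divOf_mono κ, divOf_mono ϱ, divOf_zero κ, divOf_last κ, divOf_zero ϱ,
    divOf_last ϱ, ?_⟩
  intro i j
  simp only [key]
  refine ⟨?_, ?_, ?_⟩
  · rintro h0 p ⟨rfl, rfl⟩
    exact h.1 p h0
  · rintro h1 p q ⟨rfl, rfl⟩ ⟨h2, h3⟩ hpq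
    exact (h.2 p q hpq h2.symm h3.symm).1 h1
  · rintro h1 p q ⟨rfl, rfl⟩ ⟨h2, h3⟩ hpq
    exact (h.2 p q hpq h2.symm h3.symm).2 h1

lemma exists_col {t n : ℕ} {c : Fin (t + 1) → ℕ} (h0 : c 0 = 0) (h1 : c (Fin.last t) = n)
    (p : Fin n) : ∃ i : Fin t, c i.castSucc ≤ (p : ℕ) ∧ (p : ℕ) < c i.succ := by
  by_contra hcon
  push Not at hcon
  have : ∀ k : Fin (t + 1), c k ≤ (p : ℕ) := by
    intro k
    induction k using Fin.induction with
    | zero => omega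
    | succ i ih => exact hcon i ih
  have := this (Fin.last t)
  omega

lemma exists_goodGrid {t u n : ℕ} {M : Fin t → Fin u → ℤ} {c : Fin (t + 1) → ℕ}
    {r : Fin (u + 1) → ℕ} (hc0 : c 0 = 0) (hc1 : c (Fin.last t) = n) (hr0 : r 0 = 0)
    (hr1 : r (Fin.last u) = n) : ∃ (κ : Fin n → Fin t) (ϱ : Fin n → Fin u),
    ∀ σ : Equiv.Perm (Fin n), IsGridding M σ c r → GoodGrid M κ ϱ σ := by
  choose κ hκ using exists_col hc0 hc1
  choose ϱ hϱ using exists_col hr0 hr1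
  refine ⟨κ, ϱ, fun σ h => ?_⟩
  obtain ⟨-, -, -, -, -, -, h⟩ := h
  have key : ∀ p, InCell σ c r (κ p) (ϱ (σ p)) p := fun p =>
    ⟨(hκ p).1, (hκ p).2, (hϱ (σ p)).1, (hϱ (σ p)).2⟩
  refine ⟨fun p hp => (h _ _).1 hp p (key p), fun p q hpq h1 h2 => ?_⟩
  have kq := key q
  rw [← h1, ← h2] at kq
  exact ⟨fun h3 => (h _ _).2.1 h3 p q (key p) kq hpq, fun h3 => (h _ _).2.2 h3 p q (key p) kq hpq⟩

lemma perm_eq_one_of_fiber_mono {n : ℕ} {α : Type*} (F : Fin n → α) (τ : Equiv.Perm (Fin n))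
    (hF : ∀ p, F (τ p) = F p) (hm : ∀ p q, p < q → F p = F q → τ p < τ q) : ∀ p, τ p = p := by
  intro p
  induction p using WellFoundedLT.induction with
  | ind p ih =>
    by_contra hne
    have h1 : p < τ p := by
      rcases lt_trichotomy p (τ p) with h | h | h
      · exact h
      · exact absurd h.symm hne
      · exact absurd (τ.injective (ih _ h)) hne
    have h2 : τ (τ.symm p) = p := τ.apply_symm_apply p
    have h3 : p < τ.symm p := by
      rcases lt_trichotomy p (τ.symm p) with h | h | h
      · exact h
      · rw [← h] at h2; exact absurd h2 hne
      · have := ih _ h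
        rw [h2] at this
        exact absurd this (ne_of_gt h)
    have h4 : F (τ.symm p) = F p := by rw [← hF (τ.symm p), h2]
    have := hm _ _ h3 h4.symm
    rw [h2] at this
    exact absurd this (not_lt.2 h1.le)

lemma GoodGrid.lt_iff {t u n : ℕ} {M : Fin t → Fin u → ℤ} {κ : Fin n → Fin t}
    {ϱ : Fin n → Fin u} {σ σ' : Equiv.Perm (Fin n)}
    (hM : ∀ i j, M i j = 0 ∨ M i j = 1 ∨ M i j = -1)
    (h : GoodGrid M κ ϱ σ) (h' : GoodGrid M κ ϱ σ')
    (ha : ∀ p, ϱ (σ p) = ϱ (σ' p)) (hb : ∀ v, κ (σ.symm v) = κ (σ'.symm v)) : σ = σ' := by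
  have key := perm_eq_one_of_fiber_mono (fun p => (κ p, ϱ (σ p))) (σ.trans σ'.symm) ?_ ?_
  · ext p
    have := key p
    rw [Equiv.trans_apply, Equiv.symm_apply_eq] at this
    rw [this]
  · intro p
    simp only [Equiv.trans_apply, Prod.mk.injEq]
    rw [← hb, ha (σ'.symm _)]
    simp
  · intro p q hpq hF
    simp only [Prod.mk.injEq] at hF
    obtain ⟨h1, h2⟩ := hF
    simp only [Equiv.trans_apply]
    by_contra hcon
    have hne : σ'.symm (σ q) ≠ σ'.symm (σ p) := by
      intro he
      exact hpq.ne' (σ.injective (σ'.symm.injective he))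
    have hlt := lt_of_le_of_ne (not_lt.1 hcon) hne
    have e1 : κ (σ'.symm (σ q)) = κ q := by rw [← hb]; simp
    have e2 : κ (σ'.symm (σ p)) = κ p := by rw [← hb]; simp
    have A := h.2 p q hpq h1 h2
    have B := h'.2 _ _ hlt (by rw [e1, e2, h1]) (by simp [h2])
    rw [e1] at B
    simp only [Equiv.apply_symm_apply] at B
    rw [← h1, ← h2] at B
    rcases hM (κ p) (ϱ (σ p)) with h0 | h0 | h0
    · exact h.1 p h0
    · exact absurd (A.1 h0) (not_lt.2 (B.1 h0).le)
    · exact absurd (A.2 h0) (not_lt.2 (B.2 h0).le)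

lemma card_good_le {t u n : ℕ} {M : Fin t → Fin u → ℤ}
    (hM : ∀ i j, M i j = 0 ∨ M i j = 1 ∨ M i j = -1) (κ : Fin n → Fin t) (ϱ : Fin n → Fin u)
    {l : ℝ} (hl : 0 < l) {x : Fin t → ℝ} {y : Fin u → ℝ} (hx : ∀ i, 0 < x i) (hy : ∀ j, 0 < y j)
    (h1 : ∀ i, ∑ j, (if M i j ≠ 0 then y j else 0) ≤ l * x i)
    (h2 : ∀ j, ∑ i, (if M i j ≠ 0 then x i else 0) ≤ l * y j) :
    ((Finset.univ.filter fun σ : Equiv.Perm (Fin n) => GoodGrid M κ ϱ σ).card : ℝ)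
      ≤ (l ^ 2) ^ n := by
  let wa : Fin n → Fin u → ℝ := fun p j => (if M (κ p) j ≠ 0 then y j else 0) / (l * x (κ p))
  let wb : Fin n → Fin t → ℝ := fun v i => (if M i (ϱ v) ≠ 0 then x i else 0) / (l * y (ϱ v))
  have wa0 : ∀ p j, 0 ≤ wa p j := by
    intro p j
    have := hx (κ p)
    have := hy j
    simp only [wa]; split_ifs <;> positivity
  have wb0 : ∀ p j, 0 ≤ wb p j := by
    intro p j
    have := hx j
    have := hy (ϱ p)
    simp only [wb]; split_ifs <;> positivity
  have sa : ∑ a : Fin n → Fin u, ∏ p, wa p (a p) ≤ 1 := by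
    rw [← Fintype.prod_sum]
    apply Finset.prod_le_one
    · intro p _; exact Finset.sum_nonneg fun j _ => wa0 p j
    · intro p _
      simp only [wa]
      rw [← Finset.sum_div]
      exact div_le_one_of_le₀ (h1 _) (mul_nonneg hl.le (hx _).le)
  have sb : ∑ b : Fin n → Fin t, ∏ p, wb p (b p) ≤ 1 := by
    rw [← Fintype.prod_sum]
    apply Finset.prod_le_one
    · intro p _; exact Finset.sum_nonneg fun j _ => wb0 p j
    · intro p _
      simp only [wb]
      rw [← Finset.sum_div]
      exact div_le_one_of_le₀ (h2 _) (mul_nonneg hl.le (hy _).le)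
  let W : (Fin n → Fin u) × (Fin n → Fin t) → ℝ := fun ab =>
    (∏ p, wa p (ab.1 p)) * ∏ v, wb v (ab.2 v)
  have sW : ∑ ab, W ab ≤ 1 := by
    rw [Fintype.sum_prod_type]
    simp only [W]
    rw [← Finset.sum_mul_sum]
    exact mul_le_one₀ sa (Finset.sum_nonneg fun b _ => Finset.prod_nonneg fun p _ => wb0 _ _) sb
  let S := Finset.univ.filter fun σ : Equiv.Perm (Fin n) => GoodGrid M κ ϱ σ
  let f : Equiv.Perm (Fin n) → (Fin n → Fin u) × (Fin n → Fin t) := fun σ =>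
    (fun p => ϱ (σ p), fun v => κ (σ.symm v))
  have finj : Set.InjOn f S := by
    intro σ hσ σ' hσ' he
    simp only [S, Finset.coe_filter, Finset.mem_univ, true_and, Set.mem_ofPred_eq] at hσ hσ'
    simp only [f, Prod.mk.injEq] at he
    exact hσ.lt_iff hM hσ' (fun p => congrFun he.1 p) (fun v => congrFun he.2 v)
  have hW : ∀ σ ∈ S, W (f σ) = ((l ^ 2) ^ n)⁻¹ := by
    intro σ hσ
    simp only [S, Finset.mem_filter, Finset.mem_univ, true_and] at hσ
    simp only [W, f]
    rw [← Equiv.prod_comp σ (fun v => wb v (κ (σ.symm v))), ← Finset.prod_mul_distrib]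
    have : ∀ p ∈ (Finset.univ : Finset (Fin n)),
        wa p (ϱ (σ p)) * wb (σ p) (κ (σ.symm (σ p))) = (l ^ 2)⁻¹ := by
      intro p _
      have := (hx (κ p)).ne'
      have := (hy (ϱ (σ p))).ne'
      have := hl.ne'
      have := hσ.1 p
      simp only [wa, wb, Equiv.symm_apply_apply]
      rw [if_pos this, if_pos this]
      field_simp
    rw [Finset.prod_congr rfl this]
    simp
  have : (S.card : ℝ) * ((l ^ 2) ^ n)⁻¹ ≤ 1 := by
    calc (S.card : ℝ) * ((l ^ 2) ^ n)⁻¹ = ∑ σ ∈ S, W (f σ) := by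
          rw [Finset.sum_congr rfl hW]; simp
      _ = ∑ ab ∈ S.image f, W ab := by rw [Finset.sum_image finj]
      _ ≤ ∑ ab, W ab := Finset.sum_le_univ_sum_of_nonneg fun ab =>
          mul_nonneg (Finset.prod_nonneg fun p _ => wa0 _ _) (Finset.prod_nonneg fun p _ => wb0 _ _)
      _ ≤ 1 := sW
  rwa [mul_inv_le_iff₀ (by positivity), one_mul] at this

lemma gridCount_le {t u : ℕ} {M : Fin t → Fin u → ℤ}
    (hM : ∀ i j, M i j = 0 ∨ M i j = 1 ∨ M i j = -1) (n : ℕ)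
    {l : ℝ} (hl : 0 < l) {x : Fin t → ℝ} {y : Fin u → ℝ} (hx : ∀ i, 0 < x i) (hy : ∀ j, 0 < y j)
    (h1 : ∀ i, ∑ j, (if M i j ≠ 0 then y j else 0) ≤ l * x i)
    (h2 : ∀ j, ∑ i, (if M i j ≠ 0 then x i else 0) ≤ l * y j) :
    (gridCount M n : ℝ) ≤ ((n : ℝ) + 1) ^ (t + 1 + (u + 1)) * (l ^ 2) ^ n := by
  let T : (Fin (t + 1) → Fin (n + 1)) × (Fin (u + 1) → Fin (n + 1)) →
      Finset (Equiv.Perm (Fin n)) := fun cr =>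
    Finset.univ.filter fun σ => IsGridding M σ (fun i => cr.1 i) (fun i => cr.2 i)
  have hT : ∀ cr, ((T cr).card : ℝ) ≤ (l ^ 2) ^ n := by
    intro cr
    rcases (T cr).eq_empty_or_nonempty with he | ⟨σ, hσ⟩
    · rw [he]; simp; positivity
    · simp only [T, Finset.mem_filter, Finset.mem_univ, true_and] at hσ
      obtain ⟨-, -, a1, a2, a3, a4, -⟩ := hσ
      obtain ⟨κ, ϱ, H⟩ := exists_goodGrid (n := n) (M := M) (c := fun i => (cr.1 i : ℕ)) (r := fun i => (cr.2 i : ℕ)) a1 a2 a3 a4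
      refine le_trans ?_ (card_good_le hM κ ϱ hl hx hy h1 h2)
      norm_cast
      apply Finset.card_le_card
      intro τ hτ
      simp only [T, Finset.mem_filter, Finset.mem_univ, true_and] at hτ ⊢
      exact H τ hτ
  have hg : gridCount M n ≤ ∑ cr, (T cr).card := by
    rw [gridCount, Nat.card_eq_fintype_card, Fintype.card_subtype]
    refine le_trans (Finset.card_le_card ?_) Finset.card_biUnion_le
    intro σ hσ
    simp only [Finset.mem_filter, Finset.mem_univ, true_and] at hσ
    obtain ⟨c, r, h⟩ := hσ
    obtain ⟨m1, m2, a1, a2, a3, a4, -⟩ := id h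
    have b1 : ∀ i, c i < n + 1 := fun i => by
      have := m1 (Fin.le_last i); omega
    have b2 : ∀ i, r i < n + 1 := fun i => by
      have := m2 (Fin.le_last i); omega
    rw [Finset.mem_biUnion]
    refine ⟨(fun i => ⟨c i, b1 i⟩, fun i => ⟨r i, b2 i⟩), Finset.mem_univ _, ?_⟩
    simp only [T, Finset.mem_filter, Finset.mem_univ, true_and]
    exact h
  calc (gridCount M n : ℝ) ≤ ((∑ cr, (T cr).card : ℕ) : ℝ) := by exact_mod_cast hg
    _ = ∑ cr, ((T cr).card : ℝ) := by push_cast; rfl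
    _ ≤ ∑ cr : (Fin (t + 1) → Fin (n + 1)) × (Fin (u + 1) → Fin (n + 1)), (l ^ 2) ^ n :=
        Finset.sum_le_sum fun cr _ => hT cr
    _ = _ := by
        simp [Fintype.card_prod, pow_add]

lemma exists_sign_equiv {n k : ℕ} (P Q : Fin n → Prop)
    (hP : Fintype.card {p // P p} = k) (hQ : Fintype.card {p // Q p} = k) (s : ℤ) :
    ∃ e : {p // P p} ≃ {p // Q p}, (s = 1 → ∀ p q, p < q → e p < e q) ∧
      (s = -1 → ∀ p q, p < q → e q < e p) := by
  let eP := Fintype.orderIsoFinOfCardEq {p // P p} hP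
  let eQ := Fintype.orderIsoFinOfCardEq {p // Q p} hQ
  by_cases hs : s = 1
  · refine ⟨(eP.symm.trans eQ).toEquiv, fun _ p q h => ?_, fun h => by omega⟩
    exact (eP.symm.trans eQ).strictMono h
  · refine ⟨(eP.symm.toEquiv.trans Fin.revPerm).trans eQ.toEquiv, fun h => absurd h hs,
      fun _ p q h => ?_⟩
    have h1 : eP.symm p < eP.symm q := eP.symm.strictMono h
    exact eQ.strictMono (Fin.rev_lt_rev.2 h1)

lemma exists_good {t u n : ℕ} (M : Fin t → Fin u → ℤ) (κ : Fin n → Fin t) (ϱ : Fin n → Fin u)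
    (a : Fin n → Fin u) (b : Fin n → Fin t)
    (hcard : ∀ c : Fin t × Fin u,
      Nat.card {p // (κ p, a p) = c} = Nat.card {v // (b v, ϱ v) = c})
    (h0 : ∀ p, M (κ p) (a p) ≠ 0) :
    ∃ σ : Equiv.Perm (Fin n), GoodGrid M κ ϱ σ ∧ (∀ p, ϱ (σ p) = a p) ∧ ∀ p, b (σ p) = κ p := by
  have H := fun c : Fin t × Fin u => exists_sign_equiv (fun p => (κ p, a p) = c)
    (fun v => (b v, ϱ v) = c) Fintype.card_eq_nat_card
    (Fintype.card_eq_nat_card.trans (hcard c).symm) (M c.1 c.2)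
  choose e he1 he2 using H
  let σ : Equiv.Perm (Fin n) := (Equiv.sigmaFiberEquiv fun p => (κ p, a p)).symm.trans
    ((Equiv.sigmaCongrRight e).trans (Equiv.sigmaFiberEquiv fun v => (b v, ϱ v)))
  have hσ : ∀ c p (h : (κ p, a p) = c), σ p = (e c ⟨p, h⟩ : Fin n) := by
    intro c p h
    subst h
    rfl
  have hσ' : ∀ p, (b (σ p), ϱ (σ p)) = (κ p, a p) := by
    intro p
    rw [hσ _ p rfl]
    exact (e _ ⟨p, rfl⟩).2
  simp only [Prod.mk.injEq] at hσ'
  refine ⟨σ, ⟨fun p => ?_, fun p q hpq h1 h2 => ?_⟩, fun p => (hσ' p).2, fun p => (hσ' p).1⟩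
  · rw [(hσ' p).2]; exact h0 p
  · rw [(hσ' p).2, (hσ' q).2] at h2
    rw [(hσ' p).2, hσ _ p rfl, hσ (κ p, a p) q (by rw [h1, h2])]
    exact ⟨fun h => he1 (κ p, a p) h _ _ hpq, fun h => he2 (κ p, a p) h _ _ hpq⟩

lemma count_words {n : ℕ} {α β : Type*} [Fintype α] [Fintype β] (κ : Fin n → α) (a0 : Fin n → β) :
    ∏ i, (Nat.card {p // κ p = i}).factorial ≤
      (∏ c : α × β, (Nat.card {p // (κ p, a0 p) = c}).factorial) *
      (Finset.univ.filter fun a : Fin n → β => ∀ c : α × β,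
        Nat.card {p // (κ p, a p) = c} = Nat.card {p // (κ p, a0 p) = c}).card := by
  have e1 := DomMulAct.stabilizer_card κ
  have e2 := DomMulAct.stabilizer_card (fun p => (κ p, a0 p))
  simp only [Fintype.card_eq_nat_card] at e1 e2
  rw [← e1, ← e2, Nat.card_eq_fintype_card, Nat.card_eq_fintype_card, Fintype.card_subtype,
    Fintype.card_subtype]
  apply Finset.card_le_mul_card_image_of_maps_to (f := fun g : Equiv.Perm (Fin n) => a0 ∘ g)
  · intro g hg
    simp only [Finset.mem_filter, Finset.mem_univ, true_and] at hg ⊢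
    intro c
    apply Nat.card_congr
    refine Equiv.subtypeEquiv g fun p => ?_
    rw [show κ (g p) = κ p from congrFun hg p]
    rfl
  · intro a _
    rcases Finset.eq_empty_or_nonempty ((Finset.univ.filter
      fun g : Equiv.Perm (Fin n) => κ ∘ g = κ).filter
      (fun g : Equiv.Perm (Fin n) => a0 ∘ g = a)) with he | ⟨g0, hg0⟩
    · rw [he]; simp
    · apply Finset.card_le_card_of_injOn (fun g => g * g0⁻¹)
      · intro g hg
        simp only [Finset.coe_filter, Finset.mem_filter, Finset.mem_univ, true_and,
          Set.mem_ofPred_eq] at hg hg0 ⊢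
        funext p
        simp only [Function.comp, Equiv.Perm.mul_apply]
        have k1 := congrFun hg.1 (g0⁻¹ p)
        have k2 := congrFun hg0.1 (g0⁻¹ p)
        have k3 := congrFun (hg.2.trans hg0.2.symm) (g0⁻¹ p)
        have k4 : g0 (g0⁻¹ p) = p := g0.apply_symm_apply p
        simp only [Function.comp, k4] at k1 k2 k3
        rw [k1, k3, ← k2]
      · intro g _ g' _ h
        exact mul_right_cancel h

lemma le_gridCount {t u n : ℕ} {M : Fin t → Fin u → ℤ} (F : Fin n → Fin t × Fin u)
    (hF : ∀ p, M (F p).1 (F p).2 ≠ 0) :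
    (∏ i, (Nat.card {p // (F p).1 = i}).factorial) *
      (∏ j, (Nat.card {p // (F p).2 = j}).factorial) ≤
    (∏ c, (Nat.card {p // F p = c}).factorial) ^ 2 * gridCount M n := by
  let τ := Tuple.sort fun p => (F p).1
  let τ' := Tuple.sort fun p => (F p).2
  let κ : Fin n → Fin t := fun p => (F (τ p)).1
  let a0 : Fin n → Fin u := fun p => (F (τ p)).2
  let ϱ : Fin n → Fin u := fun p => (F (τ' p)).2
  let b0 : Fin n → Fin t := fun p => (F (τ' p)).1
  have hκ : Monotone κ := Tuple.monotone_sort fun p => (F p).1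
  have hϱ : Monotone ϱ := Tuple.monotone_sort fun p => (F p).2
  have c1 : ∀ i, Nat.card {p // κ p = i} = Nat.card {p // (F p).1 = i} := fun i =>
    Nat.card_congr (Equiv.subtypeEquiv τ fun p => Iff.rfl)
  have c2 : ∀ i, Nat.card {p // ϱ p = i} = Nat.card {p // (F p).2 = i} := fun i =>
    Nat.card_congr (Equiv.subtypeEquiv τ' fun p => Iff.rfl)
  have c3 : ∀ c, Nat.card {p // (κ p, a0 p) = c} = Nat.card {p // F p = c} := fun i =>
    Nat.card_congr (Equiv.subtypeEquiv τ fun p => Iff.rfl)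
  have c4 : ∀ c : Fin u × Fin t, Nat.card {p // (ϱ p, b0 p) = c} =
      Nat.card {p // F p = c.swap} := fun i =>
    Nat.card_congr (Equiv.subtypeEquiv τ' fun p => by
      simp only [ϱ, b0, Prod.ext_iff, Prod.fst_swap, Prod.snd_swap]; tauto)
  have A := count_words κ a0
  have B := count_words ϱ b0
  simp only [c1, c3] at A
  simp only [c2, c4] at B
  have e : ∏ c : Fin u × Fin t, (Nat.card {p // F p = c.swap}).factorial =
      ∏ c, (Nat.card {p // F p = c}).factorial :=
    Equiv.prod_comp (Equiv.prodComm (Fin u) (Fin t))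
      (fun c => (Nat.card {p // F p = c}).factorial)
  rw [e] at B
  refine (Nat.mul_le_mul A B).trans ?_
  set SA := (Finset.univ.filter fun a : Fin n → Fin u => ∀ c : Fin t × Fin u,
        Nat.card {p // (κ p, a p) = c} = Nat.card {p // F p = c}) with hSA
  set SB := (Finset.univ.filter fun a : Fin n → Fin t => ∀ c : Fin u × Fin t,
        Nat.card {p // (ϱ p, a p) = c} = Nat.card {p // F p = c.swap}) with hSB
  have key : SA.card * SB.card ≤ gridCount M n := by
    rw [gridCount, Nat.card_eq_fintype_card, Fintype.card_subtype, ← Finset.card_product]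
    have ex : ∀ ab ∈ SA ×ˢ SB, ∃ σ : Equiv.Perm (Fin n), GoodGrid M κ ϱ σ ∧
        (∀ p, ϱ (σ p) = ab.1 p) ∧ ∀ p, ab.2 (σ p) = κ p := by
      rintro ⟨a, b⟩ hab
      simp only [hSA, hSB, Finset.mem_product, Finset.mem_filter, Finset.mem_univ, true_and] at hab
      apply exists_good
      · intro c
        rw [hab.1 c]
        have := hab.2 c.swap
        rw [Prod.swap_swap] at this
        rw [← this]
        apply Nat.card_congr
        refine Equiv.subtypeEquiv (Equiv.refl _) fun p => ?_
        simp only [Prod.ext_iff, Prod.fst_swap, Prod.snd_swap, Equiv.refl_apply]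
        tauto
      · intro p
        have h1 := hab.1 (κ p, a p)
        have h2 : 0 < Nat.card {q // F q = (κ p, a p)} := by
          rw [← h1]
          exact Finite.card_pos_iff.2 ⟨⟨p, rfl⟩⟩
        obtain ⟨⟨q, hq⟩⟩ := Finite.card_pos_iff.1 h2
        have := hF q
        rwa [hq] at this
    choose! f hf using ex
    apply Finset.card_le_card_of_injOn f
    · intro ab hab
      simp only [Finset.coe_filter, Finset.mem_univ, true_and, Set.mem_ofPred_eq]
      exact (hf ab hab).1.inGridClass hκ hϱ
    · intro ab hab ab' hab' he
      have h1 := hf ab hab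
      have h2 := hf ab' hab'
      rw [← he] at h2
      apply Prod.ext
      · funext p
        rw [← h1.2.1, h2.2.1]
      · funext v
        have k1 := h1.2.2 ((f ab).symm v)
        have k2 := h2.2.2 ((f ab).symm v)
        rw [Equiv.apply_symm_apply] at k1 k2
        rw [k1, k2]
  calc _ = (∏ c, (Nat.card {p // F p = c}).factorial) ^ 2 * (SA.card * SB.card) := by ring
    _ ≤ _ := Nat.mul_le_mul_left _ key

/-- Lower bound in terms of an array of cell counts. -/
lemma le_gridCount_array {t u n : ℕ} {M : Fin t → Fin u → ℤ} (m : Fin t → Fin u → ℕ)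
    (hm : ∀ i j, m i j ≠ 0 → M i j ≠ 0) (hn : ∑ i, ∑ j, m i j = n) :
    (∏ i, (∑ j, m i j).factorial) * (∏ j, (∑ i, m i j).factorial) ≤
    (∏ i, ∏ j, (m i j).factorial) ^ 2 * gridCount M n := by
  have hcard : Fintype.card (Σ c : Fin t × Fin u, Fin (m c.1 c.2)) = n := by
    rw [Fintype.card_sigma, ← hn, Fintype.sum_prod_type]
    simp
  let E : Fin n ≃ (Σ c : Fin t × Fin u, Fin (m c.1 c.2)) :=
    (Fintype.equivFinOfCardEq hcard).symm
  let F : Fin n → Fin t × Fin u := fun p => (E p).1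
  have k0 : ∀ c, Nat.card {p // F p = c} = m c.1 c.2 := by
    intro c
    rw [← Nat.card_fin (m c.1 c.2)]
    refine Nat.card_congr ((Equiv.subtypeEquiv E fun p => ?_).trans
      (Equiv.sigmaSubtype c))
    exact Iff.rfl
  have k1 : ∀ i, Nat.card {p // (F p).1 = i} = ∑ j, m i j := by
    intro i
    have h : ∀ j, m i j = Nat.card {p // F p = (i, j)} := fun j => (k0 (i, j)).symm
    simp only [h]
    rw [← Nat.card_sigma]
    refine Nat.card_congr ⟨fun p => ⟨(F p.1).2, p.1, Prod.ext (by first | exact p.2 | rfl) (by first | exact p.2 | rfl)⟩,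
      fun q => ⟨q.2.1, by rw [q.2.2]⟩, fun p => rfl, ?_⟩
    rintro ⟨j, p, hp⟩
    obtain rfl : (F p).2 = j := by rw [hp]
    rfl
  have k2 : ∀ j, Nat.card {p // (F p).2 = j} = ∑ i, m i j := by
    intro j
    have h : ∀ i, m i j = Nat.card {p // F p = (i, j)} := fun i => (k0 (i, j)).symm
    simp only [h]
    rw [← Nat.card_sigma]
    refine Nat.card_congr ⟨fun p => ⟨(F p.1).1, p.1, Prod.ext (by first | exact p.2 | rfl) (by first | exact p.2 | rfl)⟩,
      fun q => ⟨q.2.1, by rw [q.2.2]⟩, fun p => rfl, ?_⟩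
    rintro ⟨j, p, hp⟩
    obtain rfl : (F p).1 = j := by rw [hp]
    rfl
  have := le_gridCount (M := M) F ?_
  · simp only [k0, k1, k2] at this
    rwa [Fintype.prod_prod_type] at this
  · intro p
    apply hm
    have h := k0 (F p)
    rw [← h]
    exact (Finite.card_pos_iff.2 ⟨⟨p, rfl⟩⟩).ne'

section Spectral

open Matrix

variable {V : Type*} [Fintype V] [DecidableEq V]

lemma roots_finite (B : Matrix V V ℝ) : {x : ℝ | B.charpoly.IsRoot x}.Finite :=
  Polynomial.finite_setOfPred_isRoot (Matrix.charpoly_monic B).ne_zero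

lemma psd_of_le (B : Matrix V V ℝ) (hB : B.IsHermitian) {l : ℝ}
    (hl : sSup {x : ℝ | B.charpoly.IsRoot x} ≤ l) : (scalar V l - B).PosSemidef := by
  have hH : (scalar V l - B).IsHermitian := by
    apply IsHermitian.sub _ hB
    simp [IsHermitian, scalar_apply, diagonal_conjTranspose]
  rw [hH.posSemidef_iff_eigenvalues_nonneg]
  intro i
  have h1 := hH.eigenvalues_mem_spectrum_real i
  rw [mem_spectrum_iff_isRoot_charpoly, Polynomial.IsRoot.def, eval_charpoly] at h1
  have h2 : B.charpoly.IsRoot (l - hH.eigenvalues i) := by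
    rw [Polynomial.IsRoot.def, eval_charpoly]
    have : scalar V (l - hH.eigenvalues i) - B =
        -(scalar V (hH.eigenvalues i) - (scalar V l - B)) := by
      rw [map_sub]; abel
    rw [this, det_neg, h1, mul_zero]
  have h3 : l - hH.eigenvalues i ≤ l := (le_csSup (roots_finite B).bddAbove h2).trans hl
  simpa using h3

lemma quad_nonneg (B : Matrix V V ℝ) (hB : B.IsHermitian) {l : ℝ}
    (hl : sSup {x : ℝ | B.charpoly.IsRoot x} ≤ l) (v : V → ℝ) :
    0 ≤ v ⬝ᵥ ((scalar V l - B) *ᵥ v) := by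
  have := (psd_of_le B hB hl).dotProduct_mulVec_nonneg v
  simpa using this

lemma spec_nonneg [Nonempty V] (B : Matrix V V ℝ) (hB : B.IsHermitian) (h0 : ∀ a, B a a = 0) :
    0 ≤ sSup {x : ℝ | B.charpoly.IsRoot x} := by
  obtain ⟨a⟩ := ‹Nonempty V›
  have := (psd_of_le B hB le_rfl).diag_nonneg (i := a)
  simpa [h0 a, scalar_apply] using this

lemma scalar_sub_mulVec (B : Matrix V V ℝ) (l : ℝ) (v : V → ℝ) (a : V) :
    ((scalar V l - B) *ᵥ v) a = l * v a - ∑ b, B a b * v b := by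
  rw [sub_mulVec]
  simp [scalar_apply, mulVec_diagonal, mulVec, dotProduct]

lemma exists_pos_super (B : Matrix V V ℝ) (hB : B.IsHermitian) (hpos : ∀ a b, 0 ≤ B a b)
    {l : ℝ} (hl : sSup {x : ℝ | B.charpoly.IsRoot x} < l) (hl0 : 0 < l) :
    ∃ w : V → ℝ, (∀ a, 0 < w a) ∧ ∀ a, ∑ b, B a b * w b ≤ l * w a := by
  have hdet : IsUnit (scalar V l - B).det := by
    rw [isUnit_iff_ne_zero]
    intro h
    have : B.charpoly.IsRoot l := by rw [Polynomial.IsRoot.def, eval_charpoly, h]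
    exact absurd (le_csSup (roots_finite B).bddAbove this) (not_le.2 hl)
  let w := (scalar V l - B)⁻¹ *ᵥ (fun _ => (1 : ℝ))
  have hw : ∀ a, l * w a - ∑ b, B a b * w b = 1 := by
    intro a
    rw [← scalar_sub_mulVec]
    simp only [w]
    rw [mulVec_mulVec, mul_nonsing_inv _ hdet, one_mulVec]
  let N : V → ℝ := fun a => max (-w a) 0
  have hN : ∀ a, 0 ≤ N a := fun a => le_max_right _ _
  have hNw : ∀ a, 0 ≤ w a + N a := fun a => by
    have : -w a ≤ N a := le_max_left _ _
    linarith
  have hNP : ∀ a, N a * (w a + N a) = 0 := by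
    intro a
    simp only [N]
    rcases le_total (-w a) 0 with h | h
    · rw [max_eq_right h]; ring
    · rw [max_eq_left h]; ring
  have q := quad_nonneg B hB hl.le N
  have hsum : N ⬝ᵥ ((scalar V l - B) *ᵥ N) ≤ - ∑ a, N a := by
    rw [dotProduct, ← Finset.sum_neg_distrib]
    apply Finset.sum_le_sum
    intro a _
    rw [scalar_sub_mulVec]
    have e1 : ∑ b, B a b * N b = ∑ b, B a b * (w b + N b) - ∑ b, B a b * w b := by
      rw [← Finset.sum_sub_distrib]
      exact Finset.sum_congr rfl fun b _ => by ring
    have e2 : 0 ≤ ∑ b, B a b * (w b + N b) :=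
      Finset.sum_nonneg fun b _ => mul_nonneg (hpos a b) (hNw b)
    have e3 := hw a
    have e4 := hNP a
    have e5 := mul_nonneg (hN a) e2
    rw [e1]
    have : N a * (l * N a - (∑ b, B a b * (w b + N b) - ∑ b, B a b * w b)) =
      l * (N a * (w a + N a)) - N a * (l * w a - ∑ b, B a b * w b)
        - N a * ∑ b, B a b * (w b + N b) := by ring
    rw [this, e3, e4]
    linarith
  have hN0 : ∀ a, N a = 0 := by
    have hs : ∑ a, N a = 0 := le_antisymm (by linarith) (Finset.sum_nonneg fun a _ => hN a)
    intro a
    exact (Finset.sum_eq_zero_iff_of_nonneg fun a _ => hN a).1 hs a (Finset.mem_univ a)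
  have hw0 : ∀ a, 0 ≤ w a := fun a => by have := hNw a; rwa [hN0, add_zero] at this
  refine ⟨w, fun a => ?_, fun a => by linarith [hw a]⟩
  have : 0 ≤ ∑ b, B a b * w b := Finset.sum_nonneg fun b _ => mul_nonneg (hpos a b) (hw0 b)
  have h1 : 0 < l * w a := by linarith [hw a]
  exact pos_of_mul_pos_right h1 hl0.le

lemma exists_nonneg_eigenvector [Nonempty V] (B : Matrix V V ℝ) (hB : B.IsHermitian)
    (hpos : ∀ a b, 0 ≤ B a b) :
    ∃ w : V → ℝ, (∀ a, 0 ≤ w a) ∧ w ≠ 0 ∧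
      ∀ a, ∑ b, B a b * w b = sSup {x : ℝ | B.charpoly.IsRoot x} * w a := by
  set r := sSup {x : ℝ | B.charpoly.IsRoot x} with hr
  have hne : {x : ℝ | B.charpoly.IsRoot x}.Nonempty := by
    obtain ⟨a⟩ := ‹Nonempty V›
    exact ⟨hB.eigenvalues a, mem_spectrum_iff_isRoot_charpoly.1 (hB.eigenvalues_mem_spectrum_real a)⟩
  have hmem : B.charpoly.IsRoot r := hne.csSup_mem (roots_finite B)
  rw [Polynomial.IsRoot.def, eval_charpoly] at hmem
  obtain ⟨v, hv0, hv⟩ := exists_mulVec_eq_zero_iff.2 hmem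
  let w : V → ℝ := fun a => |v a|
  have hle : w ⬝ᵥ ((scalar V r - B) *ᵥ w) ≤ v ⬝ᵥ ((scalar V r - B) *ᵥ v) := by
    rw [dotProduct, dotProduct]
    apply Finset.sum_le_sum
    intro a _
    rw [scalar_sub_mulVec, scalar_sub_mulVec, mul_sub, mul_sub, Finset.mul_sum, Finset.mul_sum]
    have h1 : w a * (r * w a) = v a * (r * v a) := by
      have := abs_mul_abs_self (v a)
      simp only [w]
      linear_combination r * this
    have h2 : ∑ b, v a * (B a b * v b) ≤ ∑ b, w a * (B a b * w b) := by
      apply Finset.sum_le_sum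
      intro b _
      calc v a * (B a b * v b) ≤ |v a * (B a b * v b)| := le_abs_self _
        _ = _ := by rw [abs_mul, abs_mul, abs_of_nonneg (hpos a b)]
    linarith
  rw [hv, dotProduct_zero] at hle
  have hz : w ⬝ᵥ ((scalar V r - B) *ᵥ w) = 0 := le_antisymm hle (quad_nonneg B hB le_rfl w)
  have hk := ((psd_of_le B hB (l := r) le_rfl).dotProduct_mulVec_zero_iff w).1 (by simpa using hz)
  refine ⟨w, fun a => abs_nonneg _, ?_, ?_⟩
  · intro h
    apply hv0
    funext a
    have := congrFun h a
    simpa [w] using this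
  · intro a
    have := congrFun hk a
    rw [scalar_sub_mulVec] at this
    simp only [Pi.zero_apply] at this
    linarith

end Spectral

section Graph

variable {t u : ℕ} (M : Fin t → Fin u → ℤ)

lemma adj_lr (i : Fin t) (j : Fin u) :
    graphAdjMatrix (rowColGraph M) (Sum.inl i) (Sum.inr j) = if M i j ≠ 0 then 1 else 0 := by
  simp [graphAdjMatrix, rowColGraph]

lemma adj_rl (i : Fin t) (j : Fin u) :
    graphAdjMatrix (rowColGraph M) (Sum.inr j) (Sum.inl i) = if M i j ≠ 0 then 1 else 0 := by
  simp [graphAdjMatrix, rowColGraph]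

lemma adj_ll (i i' : Fin t) :
    graphAdjMatrix (rowColGraph M) (Sum.inl i) (Sum.inl i') = 0 := by
  simp [graphAdjMatrix, rowColGraph]

lemma adj_rr (i i' : Fin u) :
    graphAdjMatrix (rowColGraph M) (Sum.inr i) (Sum.inr i') = 0 := by
  simp [graphAdjMatrix, rowColGraph]

lemma adj_herm {V : Type*} [Fintype V] (G : SimpleGraph V) : (graphAdjMatrix G).IsHermitian := by
  ext a b
  simp [graphAdjMatrix, G.adj_comm]

lemma adj_nonneg {V : Type*} [Fintype V] (G : SimpleGraph V) (a b : V) :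
    0 ≤ graphAdjMatrix G a b := by
  simp only [graphAdjMatrix, Matrix.of_apply]
  split_ifs <;> norm_num

lemma adj_sum_l (w : Fin t ⊕ Fin u → ℝ) (i : Fin t) :
    ∑ b, graphAdjMatrix (rowColGraph M) (Sum.inl i) b * w b =
      ∑ j, if M i j ≠ 0 then w (Sum.inr j) else 0 := by
  simp only [Fintype.sum_sum_type, adj_ll, adj_lr]
  simp

lemma adj_sum_r (w : Fin t ⊕ Fin u → ℝ) (j : Fin u) :
    ∑ b, graphAdjMatrix (rowColGraph M) (Sum.inr j) b * w b =
      ∑ i, if M i j ≠ 0 then w (Sum.inl i) else 0 := by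
  simp only [Fintype.sum_sum_type, adj_rr, adj_rl]
  simp

end Graph

section Analysis

lemma log_factorial_ge (k : ℕ) : (k : ℝ) * Real.log k - k ≤ Real.log (k.factorial) := by
  rcases Nat.eq_zero_or_pos k with rfl | hk
  · simp
  have hk' : (0 : ℝ) < k := by exact_mod_cast hk
  have h := Real.pow_div_factorial_le_exp (k : ℝ) hk'.le k
  have hf : (0 : ℝ) < k.factorial := by exact_mod_cast k.factorial_pos
  have := Real.log_le_log (by positivity) h
  rw [Real.log_div (by positivity) hf.ne', Real.log_pow, Real.log_exp] at this
  linarith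

lemma log_factorial_le (k : ℕ) :
    Real.log (k.factorial) ≤ (k : ℝ) * Real.log k - k + Real.log (k + 1) + 1 := by
  have key : ∀ k : ℕ, Real.log ((k + 1).factorial) ≤
      ((k : ℝ) + 1) * Real.log (k + 1) - (k + 1) + Real.log (k + 1) + 1 := by
    intro k
    induction k with
    | zero => simp
    | succ k ih =>
      have hf : (0 : ℝ) < (k + 1).factorial := by exact_mod_cast (k + 1).factorial_pos
      rw [Nat.factorial_succ (k + 1)]
      push_cast
      have h1 : (0 : ℝ) < (k : ℝ) + 1 := by positivity
      have h2 : (0 : ℝ) < (k : ℝ) + 1 + 1 := by positivity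
      rw [Real.log_mul h2.ne' hf.ne']
      have h3 : 1 ≤ ((k : ℝ) + 1 + 1) * (Real.log (k + 1 + 1) - Real.log (k + 1)) := by
        have h4 := Real.one_sub_inv_le_log_of_pos (div_pos h2 h1)
        rw [Real.log_div h2.ne' h1.ne'] at h4
        have h5 : 1 - (((k : ℝ) + 1 + 1) / (k + 1))⁻¹ = 1 / ((k : ℝ) + 1 + 1) := by
          field_simp; ring
        rw [h5, div_le_iff₀ h2] at h4
        linarith
      linarith
  rcases k with _ | k
  · simp
  · have h := key k
    push_cast
    have h1 : Real.log ((k : ℝ) + 1) ≤ Real.log ((k : ℝ) + 1 + 1) :=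
      Real.log_le_log (by positivity) (by linarith)
    linarith

/-- `x log x` -/
def eta (x : ℝ) : ℝ := x * Real.log x

lemma eta_continuous : Continuous eta := Real.continuous_mul_log

lemma mul_eta_div (k n : ℕ) (hn : 0 < n) :
    (n : ℝ) * eta ((k : ℝ) / n) = (k : ℝ) * Real.log k - k * Real.log n := by
  have hn' : (n : ℝ) ≠ 0 := by exact_mod_cast hn.ne'
  rcases Nat.eq_zero_or_pos k with rfl | hk
  · simp [eta]
  have hk' : (k : ℝ) ≠ 0 := by exact_mod_cast hk.ne'
  rw [eta, Real.log_div hk' hn']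
  field_simp

lemma log_gridCount_ge {t u n : ℕ} {M : Fin t → Fin u → ℤ} (m : Fin t → Fin u → ℕ) (hn0 : 0 < n)
    (hm : ∀ i j, m i j ≠ 0 → M i j ≠ 0) (hn : ∑ i, ∑ j, m i j = n) :
    0 < gridCount M n ∧
    (n : ℝ) * (∑ i, eta ((∑ j, (m i j : ℝ) / n)) + ∑ j, eta ((∑ i, (m i j : ℝ) / n))
      - 2 * ∑ i, ∑ j, eta ((m i j : ℝ) / n)) - 2 * (t * (u * (Real.log (n + 1) + 1))) ≤
    Real.log (gridCount M n) := by
  have h := le_gridCount_array m hm hn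
  have hL : 0 < (∏ i, (∑ j, m i j).factorial) * (∏ j, (∑ i, m i j).factorial) :=
    Nat.mul_pos (Finset.prod_pos fun i _ => Nat.factorial_pos _)
      (Finset.prod_pos fun i _ => Nat.factorial_pos _)
  have hg : 0 < gridCount M n := Nat.pos_of_mul_pos_left (lt_of_lt_of_le hL h)
  refine ⟨hg, ?_⟩
  have hf : ∀ k : ℕ, ((k.factorial : ℕ) : ℝ) ≠ 0 := fun k => by exact_mod_cast k.factorial_ne_zero
  have h' := Real.log_le_log (by exact_mod_cast hL) (Nat.cast_le (α := ℝ).2 h)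
  have hg' : (gridCount M n : ℝ) ≠ 0 := by exact_mod_cast hg.ne'
  push_cast at h'
  rw [Real.log_mul (Finset.prod_ne_zero_iff.2 fun i _ => hf _)
      (Finset.prod_ne_zero_iff.2 fun i _ => hf _),
    Real.log_mul (pow_ne_zero _ (Finset.prod_ne_zero_iff.2 fun i _ =>
      Finset.prod_ne_zero_iff.2 fun j _ => hf _)) hg', Real.log_pow,
    Real.log_prod (fun i _ => hf _), Real.log_prod (fun i _ => hf _),
    Real.log_prod (fun i _ => Finset.prod_ne_zero_iff.2 fun j _ => hf _)] at h'
  have e0 : ∀ i, Real.log (∏ j, ((m i j).factorial : ℝ)) = ∑ j, Real.log ((m i j).factorial : ℝ) :=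
    fun i => Real.log_prod (fun i _ => hf _)
  simp only [e0] at h'
  have b1 : ∑ i, (((∑ j, m i j : ℕ) : ℝ) * Real.log ((∑ j, m i j : ℕ) : ℝ) -
      ((∑ j, m i j : ℕ) : ℝ)) ≤ ∑ i, Real.log ((∑ j, m i j).factorial : ℝ) :=
    Finset.sum_le_sum fun i _ => log_factorial_ge _
  have b2 : ∑ j, (((∑ i, m i j : ℕ) : ℝ) * Real.log ((∑ i, m i j : ℕ) : ℝ) -
      ((∑ i, m i j : ℕ) : ℝ)) ≤ ∑ j, Real.log ((∑ i, m i j).factorial : ℝ) :=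
    Finset.sum_le_sum fun i _ => log_factorial_ge _
  have b3 : ∑ i, ∑ j, Real.log ((m i j).factorial : ℝ) ≤
      ∑ i, ∑ j, ((m i j : ℝ) * Real.log (m i j) - m i j + (Real.log (n + 1) + 1)) := by
    refine Finset.sum_le_sum fun i _ => Finset.sum_le_sum fun j _ => ?_
    have h1 := log_factorial_le (m i j)
    have h2 : m i j ≤ n := by
      rw [← hn]
      exact (Finset.single_le_sum (f := fun j => m i j) (fun _ _ => Nat.zero_le _)
        (Finset.mem_univ j)).trans (Finset.single_le_sum (f := fun i => ∑ j, m i j)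
          (fun _ _ => Nat.zero_le _) (Finset.mem_univ i))
    have h3 : Real.log ((m i j : ℝ) + 1) ≤ Real.log ((n : ℝ) + 1) :=
      Real.log_le_log (by positivity) (by exact_mod_cast Nat.succ_le_succ h2)
    linarith
  have s1 : ∑ i, ((∑ j, m i j : ℕ) : ℝ) = n := by exact_mod_cast hn
  have s2 : ∑ j, ((∑ i, m i j : ℕ) : ℝ) = n := by
    rw [Finset.sum_comm] at hn
    exact_mod_cast hn
  have s3 : ∑ i, ∑ j, (m i j : ℝ) = n := by exact_mod_cast hn
  have c1 : ∀ i, (∑ j, (m i j : ℝ) / n) = ((∑ j, m i j : ℕ) : ℝ) / n := fun i => by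
    push_cast; rw [Finset.sum_div]
  have c2 : ∀ j, (∑ i, (m i j : ℝ) / n) = ((∑ i, m i j : ℕ) : ℝ) / n := fun i => by
    push_cast; rw [Finset.sum_div]
  have d1 : (n : ℝ) * ∑ i, eta ((∑ j, (m i j : ℝ) / n)) =
      ∑ i, ((∑ j, m i j : ℕ) : ℝ) * Real.log ((∑ j, m i j : ℕ) : ℝ) - n * Real.log n := by
    simp only [c1]
    rw [Finset.mul_sum]
    simp only [mul_eta_div _ _ hn0]
    rw [Finset.sum_sub_distrib, ← Finset.sum_mul, s1]
  have d2 : (n : ℝ) * ∑ j, eta ((∑ i, (m i j : ℝ) / n)) =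
      ∑ j, ((∑ i, m i j : ℕ) : ℝ) * Real.log ((∑ i, m i j : ℕ) : ℝ) - n * Real.log n := by
    simp only [c2]
    rw [Finset.mul_sum]
    simp only [mul_eta_div _ _ hn0]
    rw [Finset.sum_sub_distrib, ← Finset.sum_mul, s2]
  have d3 : (n : ℝ) * ∑ i, ∑ j, eta ((m i j : ℝ) / n) =
      ∑ i, ∑ j, (m i j : ℝ) * Real.log (m i j) - n * Real.log n := by
    rw [Finset.mul_sum]
    simp only [Finset.mul_sum, mul_eta_div _ _ hn0, Finset.sum_sub_distrib, ← Finset.sum_mul]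
    rw [s3]
  rw [Finset.sum_sub_distrib, s1] at b1
  rw [Finset.sum_sub_distrib, s2] at b2
  simp only [Finset.sum_add_distrib, Finset.sum_sub_distrib, s3, Finset.sum_const,
    Finset.card_univ, Fintype.card_fin, nsmul_eq_mul] at b3
  push_cast at h'
  have d4 : (n : ℝ) * (∑ i, eta ((∑ j, (m i j : ℝ) / n)) + ∑ j, eta ((∑ i, (m i j : ℝ) / n))
      - 2 * ∑ i, ∑ j, eta ((m i j : ℝ) / n)) = n * ∑ i, eta ((∑ j, (m i j : ℝ) / n)) +
      n * ∑ j, eta ((∑ i, (m i j : ℝ) / n)) - 2 * (n * ∑ i, ∑ j, eta ((m i j : ℝ) / n)) := by ring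
  rw [d4, d1, d2, d3]
  linarith

/-- Integer arrays approximating a probability array. -/
lemma exists_arrays {t u : ℕ} {M : Fin t → Fin u → ℤ} (p : Fin t → Fin u → ℝ)
    (hp : ∀ i j, 0 ≤ p i j) (hp1 : ∑ i, ∑ j, p i j = 1) (hpM : ∀ i j, p i j ≠ 0 → M i j ≠ 0) :
    ∃ m : ℕ → Fin t → Fin u → ℕ, (∀ n i j, m n i j ≠ 0 → M i j ≠ 0) ∧
      (∀ n, ∑ i, ∑ j, m n i j = n) ∧
      ∀ i j, Tendsto (fun n : ℕ => (m n i j : ℝ) / n) atTop (nhds (p i j)) := by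
  obtain ⟨i0, j0, h0⟩ : ∃ i0 j0, p i0 j0 ≠ 0 := by
    by_contra hcon
    push Not at hcon
    simp [hcon] at hp1
  let f : ℕ → Fin t → Fin u → ℕ := fun n i j => ⌊p i j * (n : ℝ)⌋₊
  have hle : ∀ n, ∑ i, ∑ j, f n i j ≤ n := by
    intro n
    have : ∑ i, ∑ j, (f n i j : ℝ) ≤ ∑ i, ∑ j, p i j * n :=
      Finset.sum_le_sum fun i _ => Finset.sum_le_sum fun j _ =>
        Nat.floor_le (mul_nonneg (hp i j) n.cast_nonneg)
    simp only [← Finset.sum_mul] at this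
    rw [hp1, one_mul] at this
    exact_mod_cast this
  have hf : ∀ i j, Tendsto (fun n : ℕ => (f n i j : ℝ) / n) atTop (nhds (p i j)) := fun i j =>
    (tendsto_nat_floor_mul_div_atTop (hp i j)).comp tendsto_natCast_atTop_atTop
  let d : ℕ → ℕ := fun n => n - ∑ i, ∑ j, f n i j
  have hd : Tendsto (fun n : ℕ => (d n : ℝ) / n) atTop (nhds 0) := by
    have h1 : Tendsto (fun n : ℕ => 1 - ∑ i, ∑ j, (f n i j : ℝ) / n) atTop
        (nhds (1 - ∑ i, ∑ j, p i j)) :=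
      tendsto_const_nhds.sub (tendsto_finsetSum _ fun i _ => tendsto_finsetSum _ fun j _ => hf i j)
    rw [hp1, sub_self] at h1
    refine h1.congr' ?_
    filter_upwards [eventually_gt_atTop 0] with n hn
    have hn' : (n : ℝ) ≠ 0 := by exact_mod_cast hn.ne'
    simp only [d]
    rw [Nat.cast_sub (hle n), sub_div, div_self hn']
    push_cast
    simp only [Finset.sum_div]
  refine ⟨fun n i j => f n i j + (if i = i0 then (if j = j0 then d n else 0) else 0), ?_, ?_, ?_⟩
  · intro n i j h
    apply hpM
    intro hz
    apply h
    have : f n i j = 0 := by simp [f, hz]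
    beta_reduce
    rw [this]
    split_ifs with h1 h2
    · subst h1 h2; exact absurd hz h0
    · rfl
    · rfl
  · intro n
    simp only [Finset.sum_add_distrib]
    have : ∑ i, ∑ j, (if i = i0 then (if j = j0 then d n else 0) else 0) = d n := by
      rw [Finset.sum_eq_single i0, Finset.sum_eq_single j0] <;> simp +contextual
    rw [this]
    have := hle n
    simp only [d]
    omega
  · intro i j
    have h2 : Tendsto (fun n : ℕ => (f n i j : ℝ) / n +
        (if i = i0 then (if j = j0 then (d n : ℝ) / n else 0) else 0)) atTop (nhds (p i j + 0)) := by
      refine (hf i j).add ?_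
      split_ifs
      · exact hd
      · exact tendsto_const_nhds
      · exact tendsto_const_nhds
    rw [add_zero] at h2
    refine h2.congr fun n => ?_
    push_cast
    split_ifs <;> ring

lemma tendsto_log_div : Tendsto (fun n : ℕ => (Real.log ((n : ℝ) + 1) + 1) / n) atTop (nhds 0) := by
  have h1 : Tendsto (fun x : ℝ => (Real.log x + 1) / (x - 1)) atTop (nhds 0) := by
    have := Real.tendsto_pow_log_div_mul_add_atTop 1 (-1) 1 one_ne_zero
    have h2 : Tendsto (fun x : ℝ => 1 / (1 * x + (-1))) atTop (nhds 0) := by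
      have := Real.tendsto_pow_log_div_mul_add_atTop 1 (-1) 0 one_ne_zero
      simpa using this
    have h3 := this.add h2
    rw [add_zero] at h3
    refine h3.congr fun x => ?_
    rw [← add_div]
    ring
  have h2 : Tendsto (fun n : ℕ => (n : ℝ) + 1) atTop atTop :=
    tendsto_atTop_add_const_right _ _ tendsto_natCast_atTop_atTop
  refine (h1.comp h2).congr fun n => ?_
  simp [Function.comp]

lemma entropy_value {t u : ℕ} {M : Fin t → Fin u → ℤ} {ρ : ℝ} (hρ : 0 < ρ)
    {x : Fin t → ℝ} {y : Fin u → ℝ} (hx : ∀ i, 0 ≤ x i) (hy : ∀ j, 0 ≤ y j)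
    (hne : (∃ i, x i ≠ 0) ∨ ∃ j, y j ≠ 0)
    (h1 : ∀ i, ∑ j, (if M i j ≠ 0 then y j else 0) = ρ * x i)
    (h2 : ∀ j, ∑ i, (if M i j ≠ 0 then x i else 0) = ρ * y j) :
    ∃ p : Fin t → Fin u → ℝ, (∀ i j, 0 ≤ p i j) ∧ (∑ i, ∑ j, p i j = 1) ∧
      (∀ i j, p i j ≠ 0 → M i j ≠ 0) ∧
      ∑ i, eta (∑ j, p i j) + ∑ j, eta (∑ i, p i j) - 2 * ∑ i, ∑ j, eta (p i j)
        = Real.log (ρ ^ 2) := by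
  let q : Fin t → Fin u → ℝ := fun i j => if M i j ≠ 0 then x i * y j else 0
  have q0 : ∀ i j, 0 ≤ q i j := fun i j => by
    simp only [q]; split_ifs
    · exact mul_nonneg (hx i) (hy j)
    · exact le_rfl
  have r1 : ∀ i, ∑ j, q i j = ρ * x i ^ 2 := by
    intro i
    have : ∑ j, q i j = x i * ∑ j, (if M i j ≠ 0 then y j else 0) := by
      rw [Finset.mul_sum]
      exact Finset.sum_congr rfl fun j _ => by simp only [q]; split_ifs <;> ring
    rw [this, h1]; ring
  have r2 : ∀ j, ∑ i, q i j = ρ * y j ^ 2 := by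
    intro j
    have : ∑ i, q i j = y j * ∑ i, (if M i j ≠ 0 then x i else 0) := by
      rw [Finset.mul_sum]
      exact Finset.sum_congr rfl fun j _ => by simp only [q]; split_ifs <;> ring
    rw [this, h2]; ring
  set s := ∑ i, ∑ j, q i j with hs
  have s0 : 0 < s := by
    rcases hne with ⟨i, hi⟩ | ⟨j, hj⟩
    · have : ∑ j, q i j ≤ s := Finset.single_le_sum (f := fun i => ∑ j, q i j)
        (fun i _ => Finset.sum_nonneg fun j _ => q0 i j) (Finset.mem_univ i)
      rw [r1] at this
      have : 0 < ρ * x i ^ 2 := by positivity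
      linarith
    · have : ∑ i, q i j ≤ s := by
        rw [hs, Finset.sum_comm]
        exact Finset.single_le_sum (f := fun j => ∑ i, q i j)
          (fun i _ => Finset.sum_nonneg fun j _ => q0 _ _) (Finset.mem_univ j)
      rw [r2] at this
      have : 0 < ρ * y j ^ 2 := by positivity
      linarith
  have P1 : ∀ i, ∑ j, q i j / s = ρ * x i ^ 2 / s := fun i => by rw [← Finset.sum_div, r1]
  have P2 : ∀ j, ∑ i, q i j / s = ρ * y j ^ 2 / s := fun i => by rw [← Finset.sum_div, r2]
  have T : ∑ i, ∑ j, q i j / s = 1 := by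
    simp only [← Finset.sum_div]
    exact div_self s0.ne'
  refine ⟨fun i j => q i j / s, fun i j => div_nonneg (q0 i j) s0.le, T, ?_, ?_⟩
  · intro i j h hM
    apply h
    simp [q, hM]
  · have e1 : ∑ i, eta (∑ j, q i j / s) = ∑ i, ∑ j, q i j / s * Real.log (ρ * x i ^ 2 / s) := by
      refine Finset.sum_congr rfl fun i _ => ?_
      rw [← Finset.sum_mul, eta, P1]
    have e2 : ∑ j, eta (∑ i, q i j / s) = ∑ i, ∑ j, q i j / s * Real.log (ρ * y j ^ 2 / s) := by
      rw [Finset.sum_comm]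
      refine Finset.sum_congr rfl fun i _ => ?_
      rw [← Finset.sum_mul, eta, P2]
    rw [e1, e2, Finset.mul_sum]
    simp only [Finset.mul_sum]
    rw [← Finset.sum_add_distrib, ← Finset.sum_sub_distrib]
    simp only [← Finset.sum_add_distrib, ← Finset.sum_sub_distrib]
    have : ∀ i j, q i j / s * Real.log (ρ * x i ^ 2 / s) + q i j / s * Real.log (ρ * y j ^ 2 / s)
        - 2 * eta (q i j / s) = q i j / s * Real.log (ρ ^ 2) := by
      intro i j
      by_cases hq : q i j = 0
      · simp [hq, eta]
      have hqe : q i j = x i * y j := by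
        simp only [q] at hq ⊢
        split_ifs at hq ⊢
        · rfl
        · exact absurd rfl hq
      have hxi : x i ≠ 0 := fun h => hq (by rw [hqe, h, zero_mul])
      have hyj : y j ≠ 0 := fun h => hq (by rw [hqe, h, mul_zero])
      have hs' := s0.ne'
      have hρ' := hρ.ne'
      rw [eta, hqe, Real.log_div (by positivity) hs', Real.log_div (by positivity) hs',
        Real.log_div (by positivity) hs', Real.log_mul hρ' (by positivity),
        Real.log_mul hρ' (by positivity), Real.log_mul hxi hyj, Real.log_pow, Real.log_pow,
        Real.log_pow]
      push_cast
      ring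
    simp only [this, ← Finset.sum_mul]
    rw [T, one_mul]

end Analysis

/-- Lower bound on the growth. -/
lemma exists_lower {t u : ℕ} {M : Fin t → Fin u → ℤ} {ρ : ℝ} (hρ : 0 < ρ)
    {x : Fin t → ℝ} {y : Fin u → ℝ} (hx : ∀ i, 0 ≤ x i) (hy : ∀ j, 0 ≤ y j)
    (hne : (∃ i, x i ≠ 0) ∨ ∃ j, y j ≠ 0)
    (h1 : ∀ i, ∑ j, (if M i j ≠ 0 then y j else 0) = ρ * x i)
    (h2 : ∀ j, ∑ i, (if M i j ≠ 0 then x i else 0) = ρ * y j) :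
    ∃ L : ℕ → ℝ, Tendsto L atTop (nhds (ρ ^ 2)) ∧
      ∀ᶠ n : ℕ in atTop, L n ≤ (gridCount M n : ℝ) ^ (1 / (n : ℝ)) := by
  obtain ⟨p, hp, hp1, hpM, hval⟩ := entropy_value hρ hx hy hne h1 h2
  obtain ⟨m, hm, hmn, hlim⟩ := exists_arrays p hp hp1 hpM
  let E : ℕ → ℝ := fun n => (∑ i, eta ((∑ j, (m n i j : ℝ) / n)) +
      ∑ j, eta ((∑ i, (m n i j : ℝ) / n)) - 2 * ∑ i, ∑ j, eta ((m n i j : ℝ) / n)) -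
      2 * (t * (u * ((Real.log (n + 1) + 1) / n)))
  have hE : Tendsto E atTop (nhds (Real.log (ρ ^ 2))) := by
    have hc : ∀ a, Tendsto eta (nhds a) (nhds (eta a)) := fun a => eta_continuous.tendsto a
    have : Tendsto E atTop (nhds ((∑ i, eta (∑ j, p i j) + ∑ j, eta (∑ i, p i j) -
        2 * ∑ i, ∑ j, eta (p i j)) - 2 * (t * (u * 0)))) := by
      refine Tendsto.sub (Tendsto.sub (Tendsto.add ?_ ?_) (Tendsto.const_mul _ ?_)) ?_
      · exact tendsto_finsetSum _ fun i _ => (hc _).comp (tendsto_finsetSum _ fun j _ => hlim i j)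
      · exact tendsto_finsetSum _ fun j _ => (hc _).comp (tendsto_finsetSum _ fun i _ => hlim i j)
      · exact tendsto_finsetSum _ fun i _ => tendsto_finsetSum _ fun j _ =>
          (hc _).comp (hlim i j)
      · exact ((tendsto_log_div.const_mul _).const_mul _).const_mul _
    rw [hval] at this
    simpa using this
  refine ⟨fun n => Real.exp (E n), ?_, ?_⟩
  · have := (Real.continuous_exp.tendsto _).comp hE
    rwa [Real.exp_log (by positivity)] at this
  · filter_upwards [eventually_gt_atTop 0] with n hn
    have hn' : (0 : ℝ) < n := by exact_mod_cast hn
    obtain ⟨hg, hlog⟩ := log_gridCount_ge (m n) hn (hm n) (hmn n)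
    have hg' : (0 : ℝ) < gridCount M n := by exact_mod_cast hg
    rw [Real.rpow_def_of_pos hg', Real.exp_le_exp, mul_one_div, le_div_iff₀ hn']
    refine le_trans (le_of_eq ?_) hlog
    simp only [E]
    rw [sub_mul, mul_comm _ (n : ℝ)]
    congr 1
    field_simp

lemma tendsto_poly_root (K : ℕ) (c : ℝ) (hc : 0 ≤ c) :
    Tendsto (fun n : ℕ => (((n : ℝ) + 1) ^ K * c ^ n) ^ (1 / (n : ℝ))) atTop (nhds c) := by
  have h1 : Tendsto (fun n : ℕ => Real.exp (K * (Real.log ((n : ℝ) + 1) / n))) atTop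
      (nhds (Real.exp (K * 0))) := by
    refine (Real.continuous_exp.tendsto _).comp (Tendsto.const_mul _ ?_)
    have := tendsto_log_div.sub (tendsto_one_div_atTop_nhds_zero_nat (𝕜 := ℝ))
    rw [sub_zero] at this
    refine this.congr fun n => ?_
    rw [← sub_div]; ring
  have h2 := h1.mul_const c
  simp only [mul_zero, Real.exp_zero, one_mul] at h2
  refine h2.congr' ?_
  filter_upwards [eventually_gt_atTop 0] with n hn
  have hn' : (n : ℝ) ≠ 0 := by exact_mod_cast hn.ne'
  have hpos : (0 : ℝ) < ((n : ℝ) + 1) ^ K := by positivity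
  rw [Real.mul_rpow hpos.le (pow_nonneg hc n), ← Real.rpow_natCast c n, ← Real.rpow_mul hc,
    mul_one_div_cancel hn', Real.rpow_one, Real.rpow_def_of_pos hpos, Real.log_pow]
  congr 2
  ring

/-- The growth rate of a monotone grid class exists and equals the square of the spectral
radius of its row-column graph. -/
theorem grid_growth_rate_eq_sq_spectralRadius {t u : ℕ} (ht : 1 ≤ t) (hu : 1 ≤ u)
    (M : Fin t → Fin u → ℤ) (hM : ∀ i j, M i j = 0 ∨ M i j = 1 ∨ M i j = -1) :
    Tendsto (fun n : ℕ => (gridCount M n : ℝ) ^ (1 / (n : ℝ))) atTop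
      (nhds (graphSpectralRadius (rowColGraph M) ^ 2)) := by
  have hV : Nonempty (Fin t ⊕ Fin u) := ⟨Sum.inl ⟨0, ht⟩⟩
  set B := graphAdjMatrix (rowColGraph M) with hBdef
  have hB : B.IsHermitian := adj_herm _
  have hpos : ∀ a b, 0 ≤ B a b := adj_nonneg _
  have hdiag : ∀ a, B a a = 0 := by
    rintro (a | a)
    · exact adj_ll M a a
    · exact adj_rr M a a
  set ρ := graphSpectralRadius (rowColGraph M) with hρdef
  have hρ : ρ = sSup {x : ℝ | B.charpoly.IsRoot x} := rfl
  have hρ0 : 0 ≤ ρ := by rw [hρ]; exact spec_nonneg B hB hdiag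
  rw [tendsto_order]
  constructor
  · intro a ha
    rcases hρ0.eq_or_lt with h0 | h0
    · rw [← h0] at ha
      have ha' : a < 0 := by simpa using ha
      exact Eventually.of_forall fun n => ha'.trans_le (by positivity)
    · obtain ⟨w, hw0, hwne, hw⟩ := exists_nonneg_eigenvector B hB hpos
      rw [← hρ] at hw
      obtain ⟨L, hL, hLe⟩ := exists_lower (M := M) h0 (x := fun i => w (Sum.inl i))
        (y := fun j => w (Sum.inr j)) (fun i => hw0 _) (fun j => hw0 _)
        (by
          by_contra hcon
          push Not at hcon
          apply hwne
          funext b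
          rcases b with b | b
          · exact hcon.1 b
          · exact hcon.2 b)
        (fun i => by rw [← adj_sum_l M w]; exact hw _)
        (fun j => by rw [← adj_sum_r M w]; exact hw _)
      filter_upwards [(tendsto_order.1 hL).1 a ha, hLe] with n h1 h2
      exact h1.trans_le h2
  · intro b hb
    obtain ⟨l, hl, hlb⟩ : ∃ l, ρ < l ∧ l ^ 2 < b := by
      refine ⟨Real.sqrt ((ρ ^ 2 + b) / 2), ?_, ?_⟩
      · exact Real.lt_sqrt_of_sq_lt (by linarith)
      · rw [Real.sq_sqrt (by nlinarith)]
        linarith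
    have hl0 : 0 < l := hρ0.trans_lt hl
    obtain ⟨w, hw0, hw⟩ := exists_pos_super B hB hpos (l := l) (by rw [← hρ]; exact hl) hl0
    have hup := fun n => gridCount_le hM n hl0 (x := fun i => w (Sum.inl i))
        (y := fun j => w (Sum.inr j)) (fun i => hw0 _) (fun j => hw0 _)
        (fun i => by rw [← adj_sum_l M w]; exact hw _)
        (fun j => by rw [← adj_sum_r M w]; exact hw _)
    have hlim := tendsto_poly_root (t + 1 + (u + 1)) (l ^ 2) (by positivity)
    filter_upwards [(tendsto_order.1 hlim).2 b hlb] with n hn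
    exact (Real.rpow_le_rpow (by positivity) (hup n) (by positivity)).trans_lt hn
end
end

section
/- Let G be a finite connected simple graph. For k ≥ 1, let W(2k) denote the number of closed walks of length 2k in G (over all starting vertices) and B(2k) the number of balanced closed walks of length 2k in G. Then lim_{k→∞} B(2k)^{1/k} and lim_{k→∞} W(2k)^{1/k} both exist and are equal, their common value being ρ(G)², the square of the spectral radius of G. -/
noncomputable section

open Filter

open scoped Classical

/-- `W(h)`: the number of closed walks of length `h` in `G`, over all starting vertices. -/
def closedWalkCount {V : Type*} [Fintype V] (G : SimpleGraph V) (h : ℕ) : ℕ :=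
  ∑ v : V, Nat.card {w : G.Walk v v // w.length = h}

/-- A closed walk is balanced if each edge is traversed the same number of times in
each of its two directions. -/
def IsBalancedWalk {V : Type*} [DecidableEq V] {G : SimpleGraph V} {v : V}
    (w : G.Walk v v) : Prop :=
  ∀ x y : V,
    (w.darts.map fun d => d.toProd).count (x, y) =
      (w.darts.map fun d => d.toProd).count (y, x)

/-- `B(h)`: the number of balanced closed walks of length `h` in `G`. -/
def balancedWalkCount {V : Type*} [Fintype V] [DecidableEq V] (G : SimpleGraph V) (h : ℕ) : ℕ :=
  ∑ v : V, Nat.card {w : G.Walk v v // w.length = h ∧ IsBalancedWalk w}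

section Helpers

variable {V : Type*} [Fintype V] [DecidableEq V]

theorem aux_hermitian (G : SimpleGraph V) : (graphAdjMatrix G).IsHermitian := by
  ext i j
  simp [graphAdjMatrix, G.adj_comm]

theorem aux_trace_pow {A : Matrix V V ℝ} (hA : A.IsHermitian) (k : ℕ) :
    (A ^ k).trace = ∑ i, hA.eigenvalues i ^ k := by
  conv_lhs => rw [hA.spectral_theorem, ← map_pow, Unitary.conjStarAlgAut_apply,
    Matrix.trace_mul_cycle, Unitary.coe_star_mul_self, one_mul, Matrix.diagonal_pow]
  simp [Matrix.trace_diagonal]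

theorem aux_isRoot {A : Matrix V V ℝ} (hA : A.IsHermitian) (x : ℝ) :
    A.charpoly.IsRoot x ↔ ∃ i, hA.eigenvalues i = x := by
  rw [← Matrix.mem_spectrum_iff_isRoot_charpoly, hA.spectrum_real_eq_range_eigenvalues]
  rfl

theorem aux_bdd (G : SimpleGraph V) :
    BddAbove {x : ℝ | (graphAdjMatrix G).charpoly.IsRoot x} := by
  have : {x : ℝ | (graphAdjMatrix G).charpoly.IsRoot x} =
      Set.range (aux_hermitian G).eigenvalues := by
    ext x
    exact aux_isRoot (aux_hermitian G) x
  rw [this]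
  exact (Set.finite_range _).bddAbove

theorem aux_le (G : SimpleGraph V) (i : V) :
    (aux_hermitian G).eigenvalues i ≤ graphSpectralRadius G :=
  le_csSup (aux_bdd G) ((aux_isRoot (aux_hermitian G) _).2 ⟨i, rfl⟩)

theorem aux_attained (G : SimpleGraph V) [Nonempty V] :
    ∃ i, (aux_hermitian G).eigenvalues i = graphSpectralRadius G := by
  have : {x : ℝ | (graphAdjMatrix G).charpoly.IsRoot x} =
      Set.range (aux_hermitian G).eigenvalues := by
    ext x
    exact aux_isRoot (aux_hermitian G) x
  have h := (Set.range_nonempty (aux_hermitian G).eigenvalues).csSup_mem (Set.finite_range _)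
  rw [← this] at h
  exact (aux_isRoot (aux_hermitian G) _).1 h

theorem aux_psd (G : SimpleGraph V) :
    (algebraMap ℝ (Matrix V V ℝ) (graphSpectralRadius G) - graphAdjMatrix G).PosSemidef := by
  rw [Matrix.posSemidef_iff_isHermitian_and_spectrum_nonneg]
  refine ⟨?_, ?_⟩
  · refine Matrix.IsHermitian.sub ?_ (aux_hermitian G)
    ext i j
    simp [Matrix.algebraMap_matrix_apply, eq_comm]
  · rw [← spectrum.singleton_sub_eq, (aux_hermitian G).spectrum_real_eq_range_eigenvalues]
    rintro x ⟨a, ha, b, ⟨i, rfl⟩, rfl⟩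
    have := aux_le G i
    simp only [Set.mem_singleton_iff] at ha
    simp [ha, this]

theorem aux_rayleigh (G : SimpleGraph V) (y : V → ℝ) :
    ∑ i, ∑ j, y i * graphAdjMatrix G i j * y j ≤ graphSpectralRadius G * ∑ i, y i ^ 2 := by
  have h := (aux_psd G).dotProduct_mulVec_nonneg y
  rw [Matrix.sub_mulVec, dotProduct_sub, Algebra.algebraMap_eq_smul_one, Matrix.smul_mulVec,
    Matrix.one_mulVec] at h
  simp only [dotProduct, Matrix.mulVec, Finset.mul_sum, Pi.star_apply, star_trivial,
    Pi.smul_apply, smul_eq_mul] at h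
  rw [Finset.mul_sum]
  have e1 : ∑ i, ∑ j, y i * graphAdjMatrix G i j * y j =
      ∑ i, ∑ j, y i * (graphAdjMatrix G i j * y j) := by simp only [mul_assoc]
  have e2 : ∑ i, graphSpectralRadius G * y i ^ 2 = ∑ i, y i * (graphSpectralRadius G * y i) :=
    Finset.sum_congr rfl fun i _ => by ring
  rw [e1, e2]
  linarith

theorem aux_abs_le (G : SimpleGraph V) (i : V) :
    |(aux_hermitian G).eigenvalues i| ≤ graphSpectralRadius G := by
  have h1 := (aux_hermitian G).eigenvalues_eq i
  set x : V → ℝ := ⇑((aux_hermitian G).eigenvectorBasis i) with hx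
  have hn : ∑ j, x j ^ 2 = 1 := by
    have := (aux_hermitian G).eigenvectorBasis.norm_eq_one i
    rw [EuclideanSpace.norm_eq, Real.sqrt_eq_one] at this
    simpa using this
  have h2 := aux_rayleigh G (fun j => |x j|)
  simp only [sq_abs, hn, mul_one] at h2
  refine le_trans ?_ h2
  rw [h1]
  simp only [dotProduct, Matrix.mulVec, Finset.mul_sum, Pi.star_apply, star_trivial,
    RCLike.re_to_real]
  refine (Finset.abs_sum_le_sum_abs _ _).trans (Finset.sum_le_sum fun a _ => ?_)
  refine (Finset.abs_sum_le_sum_abs _ _).trans (Finset.sum_le_sum fun b _ => ?_)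
  rw [abs_mul, abs_mul, mul_assoc]
  have : |graphAdjMatrix G a b| = graphAdjMatrix G a b := by
    apply abs_of_nonneg
    simp only [graphAdjMatrix, Matrix.of_apply]
    split_ifs <;> norm_num
  rw [this]

theorem aux_pow_entry (G : SimpleGraph V) (n : ℕ) (u v : V) :
    (graphAdjMatrix G ^ n) u v = (Nat.card {w : G.Walk u v // w.length = n} : ℝ) := by
  have h : graphAdjMatrix G = G.adjMatrix ℝ := by
    ext a b
    simp [graphAdjMatrix, SimpleGraph.adjMatrix_apply]
  rw [h, SimpleGraph.adjMatrix_pow_apply_eq_card_walk, Nat.card_eq_fintype_card]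
  rfl

theorem aux_W (G : SimpleGraph V) (n : ℕ) :
    (closedWalkCount G n : ℝ) = ∑ i, (aux_hermitian G).eigenvalues i ^ n := by
  rw [← aux_trace_pow, Matrix.trace, closedWalkCount, Nat.cast_sum]
  simp [aux_pow_entry]

theorem aux_W_pairs (G : SimpleGraph V) (m : ℕ) :
    (closedWalkCount G (2 * m)) =
      ∑ u : V, ∑ v : V, (Nat.card {w : G.Walk u v // w.length = m}) ^ 2 := by
  have : (closedWalkCount G (2 * m) : ℝ) =
      ∑ u : V, ∑ v : V, (Nat.card {w : G.Walk u v // w.length = m} : ℝ) ^ 2 := by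
    rw [closedWalkCount, Nat.cast_sum]
    refine Finset.sum_congr rfl fun u _ => ?_
    rw [← aux_pow_entry, two_mul, pow_add, Matrix.mul_apply]
    refine Finset.sum_congr rfl fun v _ => ?_
    have hs : (graphAdjMatrix G ^ m) v u = (graphAdjMatrix G ^ m) u v := by
      have := ((aux_hermitian G).pow m).apply u v
      simpa using this
    rw [hs, aux_pow_entry, sq]
  exact_mod_cast this

theorem aux_cs {α β : Type*} [Finite α] [Fintype β] (f : α → β) :
    Nat.card α ^ 2 ≤ Fintype.card β * Nat.card {p : α × α // f p.1 = f p.2} := by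
  have := Fintype.ofFinite α
  have e1 : Nat.card α = ∑ b : β, Nat.card {a // f a = b} := by
    rw [← Nat.card_sigma]
    exact Nat.card_congr (Equiv.sigmaFiberEquiv f).symm
  have e2 : Nat.card {p : α × α // f p.1 = f p.2} = ∑ b : β, Nat.card {a // f a = b} ^ 2 := by
    simp only [sq, ← Nat.card_prod]
    rw [← Nat.card_sigma]
    refine Nat.card_congr
      { toFun := fun p => ⟨f p.1.1, ⟨p.1.1, rfl⟩, ⟨p.1.2, p.2.symm⟩⟩
        invFun := fun q => ⟨(q.2.1.1, q.2.2.1), q.2.1.2.trans q.2.2.2.symm⟩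
        left_inv := fun p => rfl
        right_inv := ?_ }
    rintro ⟨b, ⟨x, rfl⟩, ⟨y, hy⟩⟩
    rfl
  rw [e1, e2]
  exact sq_sum_le_card_mul_sum_sq

/-- Number of times each ordered pair is traversed, for walks of length `m`. -/
def auxType (G : SimpleGraph V) (m : ℕ) {u v : V} (w : {w : G.Walk u v // w.length = m}) :
    V × V → Fin (m + 1) := fun e =>
  ⟨(w.1.darts.map fun d => d.toProd).count e, by
    have := List.count_le_length (a := e) (l := w.1.darts.map fun d => d.toProd)
    rw [List.length_map, SimpleGraph.Walk.length_darts, w.2] at this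
    omega⟩

theorem aux_count_reverse {G : SimpleGraph V} {u v : V} (w : G.Walk u v) (x y : V) :
    (w.reverse.darts.map fun d => d.toProd).count (x, y) =
      (w.darts.map fun d => d.toProd).count (y, x) := by
  rw [SimpleGraph.Walk.darts_reverse, List.map_reverse, List.count_reverse, List.map_map]
  have : ((fun d : G.Dart => d.toProd) ∘ SimpleGraph.Dart.symm) =
      Prod.swap ∘ (fun d : G.Dart => d.toProd) := by
    funext d
    rfl
  rw [this, ← List.map_map]
  exact List.count_map_of_injective _ Prod.swap Prod.swap_injective (y, x)

theorem aux_balanced {G : SimpleGraph V} {m : ℕ} {u v : V}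
    (w w' : {w : G.Walk u v // w.length = m}) (h : auxType G m w = auxType G m w') :
    IsBalancedWalk (w.1.append w'.1.reverse) := by
  have hc : ∀ e, (w.1.darts.map fun d => d.toProd).count e =
      (w'.1.darts.map fun d => d.toProd).count e := fun e =>
    congrArg Fin.val (congrFun h e)
  intro x y
  rw [SimpleGraph.Walk.darts_append, List.map_append, List.count_append, List.count_append,
    aux_count_reverse, aux_count_reverse, hc, hc, add_comm]

theorem aux_inj {G : SimpleGraph V} {m : ℕ} {u v v' : V}
    (p q : G.Walk u v) (p' q' : G.Walk u v') (hp : p.length = m) (hp' : p'.length = m)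
    (h : p.append q.reverse = p'.append q'.reverse) :
    ∃ e : v = v', p' = p.copy rfl e ∧ q' = q.copy rfl e := by
  have hv : v = v' := by
    have h1 := congrArg (fun w => w.getVert m) h
    simpa [SimpleGraph.Walk.getVert_append, hp, hp'] using h1
  subst hv
  refine ⟨rfl, ?_⟩
  have hs := congrArg SimpleGraph.Walk.support h
  rw [SimpleGraph.Walk.support_append, SimpleGraph.Walk.support_append] at hs
  obtain ⟨h1, h2⟩ := List.append_inj hs (by simp [hp, hp'])
  have h3 : q.reverse.support = q'.reverse.support := by
    rw [← SimpleGraph.Walk.cons_tail_support, h2, SimpleGraph.Walk.cons_tail_support]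
  simp only [SimpleGraph.Walk.support_reverse, List.reverse_inj] at h3
  exact ⟨(SimpleGraph.Walk.ext_support h1).symm, (SimpleGraph.Walk.ext_support h3).symm⟩

theorem aux_fin (G : SimpleGraph V) (u v : V) (m : ℕ) :
    Finite {w : G.Walk u v // w.length = m} := inferInstance

theorem aux_B_lower (G : SimpleGraph V) (m : ℕ) (u : V) :
    ∑ v : V, Nat.card {p : {w : G.Walk u v // w.length = m} × {w : G.Walk u v // w.length = m} //
      auxType G m p.1 = auxType G m p.2} ≤
    Nat.card {w : G.Walk u u // w.length = 2 * m ∧ IsBalancedWalk w} := by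
  have : Finite {w : G.Walk u u // w.length = 2 * m ∧ IsBalancedWalk w} :=
    Finite.of_injective
      (fun w => (⟨w.1, w.2.1⟩ : {w : G.Walk u u // w.length = 2 * m}))
      (fun a b h => Subtype.ext (Subtype.mk.inj h))
  rw [← Nat.card_sigma]
  refine Nat.card_le_card_of_injective
    (fun p => ⟨p.2.1.1.1.append p.2.1.2.1.reverse, ?_, aux_balanced _ _ p.2.2⟩) ?_
  · rw [SimpleGraph.Walk.length_append, SimpleGraph.Walk.length_reverse, p.2.1.1.2, p.2.1.2.2]
    ring
  · rintro ⟨v, ⟨⟨⟨p, hp⟩, ⟨q, hq⟩⟩, h⟩⟩ ⟨v', ⟨⟨⟨p', hp'⟩, ⟨q', hq'⟩⟩, h'⟩⟩ heq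
    obtain ⟨rfl, rfl, rfl⟩ := aux_inj p q p' q' hp hp' (congrArg Subtype.val heq)
    rfl

theorem aux_W_le (G : SimpleGraph V) (m : ℕ) :
    closedWalkCount G (2 * m) ≤
      (m + 1) ^ (Fintype.card V * Fintype.card V) * balancedWalkCount G (2 * m) := by
  rw [aux_W_pairs, balancedWalkCount, Finset.mul_sum]
  refine Finset.sum_le_sum fun u _ => ?_
  refine le_trans ?_ (Nat.mul_le_mul_left _ (aux_B_lower G m u))
  rw [Finset.mul_sum]
  refine Finset.sum_le_sum fun v _ => ?_
  refine (aux_cs (auxType G m (u := u) (v := v))).trans (le_of_eq ?_)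
  simp

theorem aux_B_le (G : SimpleGraph V) (h : ℕ) : balancedWalkCount G h ≤ closedWalkCount G h := by
  refine Finset.sum_le_sum fun u _ => ?_
  exact Nat.card_le_card_of_injective
      (fun w => (⟨w.1, w.2.1⟩ : {w : G.Walk u u // w.length = h}))
      (fun a b h => Subtype.ext (Subtype.mk.inj h))

theorem aux_W_bounds (G : SimpleGraph V) [Nonempty V] (k : ℕ) :
    (graphSpectralRadius G ^ 2) ^ k ≤ closedWalkCount G (2 * k) ∧
    (closedWalkCount G (2 * k) : ℝ) ≤ Fintype.card V * (graphSpectralRadius G ^ 2) ^ k := by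
  rw [aux_W]
  simp only [pow_mul]
  constructor
  · obtain ⟨i, hi⟩ := aux_attained G
    rw [← hi]
    exact Finset.single_le_sum (f := fun i => ((aux_hermitian G).eigenvalues i ^ 2) ^ k)
      (fun j _ => by positivity) (Finset.mem_univ i)
  · rw [← nsmul_eq_mul, ← Finset.card_univ]
    refine Finset.sum_le_card_nsmul _ _ _ fun i _ => ?_
    have := aux_abs_le G i
    refine pow_le_pow_left₀ (by positivity) ?_ k
    exact sq_le_sq' (by linarith [neg_abs_le ((aux_hermitian G).eigenvalues i)])
      (aux_le G i)

theorem aux_lim_const (c : ℝ) (hc : 0 < c) (r : ℝ) :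
    Tendsto (fun k : ℕ => c ^ (1 / (k : ℝ)) * r) atTop (nhds r) := by
  have h : Tendsto (fun k : ℕ => c ^ (1 / (k : ℝ))) atTop (nhds (c ^ (0 : ℝ))) :=
    (Real.continuous_const_rpow hc.ne').continuousAt.tendsto.comp
      tendsto_one_div_atTop_nhds_zero_nat
  simpa using h.mul_const r

theorem aux_lim_poly (d : ℕ) (r : ℝ) :
    Tendsto (fun k : ℕ => ((((k : ℝ) + 1) ^ d)⁻¹) ^ (1 / (k : ℝ)) * r) atTop (nhds r) := by
  have h1 := tendsto_rpow_div_mul_add 1 1 (-1) zero_ne_one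
  have h2 : Tendsto (fun k : ℕ => (k : ℝ) + 1) atTop atTop :=
    tendsto_atTop_add_const_right _ _ tendsto_natCast_atTop_atTop
  have h3 := h1.comp h2
  have h4 := ((h3.pow d).inv₀ (by simp)).mul_const r
  simp only [one_pow, inv_one, one_mul] at h4
  refine h4.congr fun k => ?_
  have hk : (0 : ℝ) ≤ (k : ℝ) + 1 := by positivity
  simp only [Function.comp_apply]
  rw [Real.inv_rpow (by positivity), ← Real.rpow_natCast, ← Real.rpow_natCast,
    ← Real.rpow_mul hk, ← Real.rpow_mul hk, mul_comm (d : ℝ)]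
  ring_nf

theorem aux_squeeze (f : ℕ → ℝ) (d : ℕ) (c r : ℝ) (hc : 0 < c) (hr : 0 ≤ r)
    (h1 : ∀ k : ℕ, r ^ k ≤ ((k : ℝ) + 1) ^ d * f k) (h2 : ∀ k, f k ≤ c * r ^ k) :
    Tendsto (fun k : ℕ => f k ^ (1 / (k : ℝ))) atTop (nhds r) := by
  refine tendsto_of_tendsto_of_tendsto_of_le_of_le' (aux_lim_poly d r) (aux_lim_const c hc r) ?_ ?_
  all_goals
    filter_upwards [eventually_ge_atTop 1] with k hk
    have hk0 : k ≠ 0 := by omega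
    have hkk : r = (r ^ k) ^ (1 / (k : ℝ)) := by
      rw [one_div, Real.pow_rpow_inv_natCast hr hk0]
    have hlow : (((k : ℝ) + 1) ^ d)⁻¹ * r ^ k ≤ f k := by
      rw [inv_mul_le_iff₀ (by positivity)]
      exact h1 k
    have hf0 : 0 ≤ f k := le_trans (by positivity) hlow
    conv in (_ * r) => rw [hkk]
    rw [← Real.mul_rpow (by positivity) (by positivity)]
    apply Real.rpow_le_rpow _ _ (by positivity)
    · first | exact hf0 | positivity
    · first | exact hlow | exact h2 k

end Helpers

/-- For a finite connected simple graph, `lim B(2k)^(1/k)` and `lim W(2k)^(1/k)` both exist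
and equal the square of the spectral radius of the graph. -/
theorem balanced_and_even_closed_walk_growth {V : Type*} [Fintype V] [DecidableEq V]
    (G : SimpleGraph V) (hG : G.Connected) :
    Tendsto (fun k : ℕ => (balancedWalkCount G (2 * k) : ℝ) ^ (1 / (k : ℝ))) atTop
        (nhds (graphSpectralRadius G ^ 2)) ∧
      Tendsto (fun k : ℕ => (closedWalkCount G (2 * k) : ℝ) ^ (1 / (k : ℝ))) atTop
        (nhds (graphSpectralRadius G ^ 2)) := by
  have : Nonempty V := hG.nonempty
  have hc : (0 : ℝ) < Fintype.card V := by exact_mod_cast Fintype.card_pos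
  have hr : 0 ≤ graphSpectralRadius G ^ 2 := sq_nonneg _
  constructor
  · refine aux_squeeze (fun k => (balancedWalkCount G (2 * k) : ℝ))
      (Fintype.card V * Fintype.card V) (Fintype.card V) _ hc hr (fun k => ?_) (fun k => ?_)
    · refine (aux_W_bounds G k).1.trans ?_
      exact_mod_cast aux_W_le G k
    · refine le_trans ?_ (aux_W_bounds G k).2
      exact_mod_cast aux_B_le G (2 * k)
  · refine aux_squeeze (fun k => (closedWalkCount G (2 * k) : ℝ))
      0 (Fintype.card V) _ hc hr (fun k => ?_) (fun k => (aux_W_bounds G k).2)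
    simpa using (aux_W_bounds G k).1
end
end
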